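/- For any integer k ≥ 1, γ̄(ℤ, {1, 3k}) = 2k/(6k-1), and likewise γ̄(ℤ, {1, -3k+1}) = 2k/(6k-1) for k ≥ 1 with -3k+1 ∉ {0,1} (i.e., k ≥ 1). -/

import Mathlib

open Filter

open scoped Classical in
noncomputable def lowerDensity (U : Set ℤ) : ℝ :=
  Filter.liminf (fun n : ℕ =>
    (((Finset.Icc (-(n:ℤ)) (n:ℤ)).filter (fun m => m ∈ U)).card : ℝ) / (2*(n:ℝ)+1))
    Filter.atTop

/-- `D` is a dominating set of the Cayley digraph `Γ(ℤ, S)`. -/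
def IsDominating (S D : Set ℤ) : Prop :=
  ∀ v : ℤ, v ∈ D ∨ ∃ u ∈ D, ∃ s ∈ S, v = u + s

/-- The domination ratio of `Γ(ℤ, S)`. -/
noncomputable def domRatio (S : Set ℤ) : ℝ :=
  sInf {x : ℝ | ∃ D : Set ℤ, IsDominating S D ∧ x = lowerDensity D}

/-!
Call `x ∈ D` the start of a short gap if `x + 1 ∈ D` or `x + 2 ∈ D`.

Lower bound: three consecutive integers outside a dominating set `D` of `Γ(ℤ, {1, s})` force two
adjacent elements of `D`, a translate by `s` earlier. Averaging the number of elements of `D` among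
three consecutive integers therefore gives `3 δ(D) ≥ 1 + δ(short gaps)`, up to functions of mean
zero. For `s = 3k`, an `x ∈ D` with no short gap at `x` and `x + 2 - s` forces `x + 3 ∈ D` and
`x + 2 - s ∈ D`; without short gaps nearby, `x, x + 3, …, x + 3(k - 1)` and then `x - 1` would all
lie in `D`. Hence a short gap starts in each window of `6k - 1` integers, and
`δ(D) ≥ (1 + 1 / (6k - 1)) / 3`.

Upper bound: modulo `N = 6k - 1` the numbers `2` and `3k` are inverse to each other, so doubling
turns the closed neighbourhood `{0, 1, 3k}` into `{0, 2, 1}`, and the residues whose double is a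
multiple of `3` in `{0, …, N - 1}` form a dominating set of density `2k / N`.

The reflection `x ↦ 1 - x` maps `{0, 1, 3k}` to `{0, 1, 1 - 3k}`, which settles the second family.
-/

open scoped fwdDiff Pointwise Topology

/-- The mean of a function over the interval `[-n, n]`, as a linear functional. -/
noncomputable def symMean (n : ℕ) : (ℤ → ℝ) →ₗ[ℝ] ℝ :=
  (2 * n + 1 : ℝ)⁻¹ • ∑ v ∈ Finset.Icc (-n : ℤ) n, LinearMap.proj v

lemma symMean_apply (n : ℕ) (f : ℤ → ℝ) :
    symMean n f = (∑ v ∈ Finset.Icc (-n : ℤ) n, f v) / (2 * n + 1) := by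
  simp [symMean, div_eq_inv_mul]

lemma symMean_const (n : ℕ) (c : ℝ) : symMean n (fun _ ↦ c) = c := by
  have card_eq : ((n : ℤ) + 1 - -n).toNat = 2 * n + 1 := by lia
  rw [symMean_apply, Finset.sum_const, Int.card_Icc, card_eq, nsmul_eq_mul]
  push_cast
  field_simp

lemma symMean_mono (n : ℕ) : Monotone (symMean n) := fun f g h ↦ by
  rw [symMean_apply, symMean_apply]
  gcongr with v
  exact h v

lemma symMean_comp_neg (n : ℕ) (f : ℤ → ℝ) : symMean n (fun v ↦ f (-v)) = symMean n f := by
  rw [symMean_apply, symMean_apply]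
  congr 1
  have neg_mem : ∀ v ∈ Finset.Icc (-n : ℤ) n, -v ∈ Finset.Icc (-n : ℤ) n := by
    simp only [Finset.mem_Icc]
    lia
  exact Finset.sum_nbij' Neg.neg Neg.neg neg_mem neg_mem (by simp) (by simp) (by simp)

lemma lowerDensity_eq_liminf_symMean (D : Set ℤ) :
    lowerDensity D = liminf (fun n ↦ symMean n (D.indicator 1)) atTop := by
  classical
  unfold lowerDensity
  congr! 2 with n
  simp [symMean_apply, Set.indicator_apply]

lemma lowerDensity_neg (D : Set ℤ) : lowerDensity (-D) = lowerDensity D := by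
  simp only [lowerDensity_eq_liminf_symMean]
  congr! 2 with n
  exact symMean_comp_neg n (D.indicator 1)

/-- The functions whose symmetric means tend to `0`. Identities and inequalities between densities
are obtained from pointwise ones that hold up to such a function. -/
def meanZero : Submodule ℝ (ℤ → ℝ) where
  carrier := {f | Tendsto (fun n ↦ symMean n f) atTop (𝓝 0)}
  add_mem' hf hg := by simpa using Tendsto.add hf hg
  zero_mem' := by simp
  smul_mem' c f hf := by simpa using Tendsto.const_mul c hf

lemma tendsto_symMean_const_add {h : ℤ → ℝ} (hh : h ∈ meanZero) (c : ℝ) :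
    Tendsto (fun n ↦ symMean n ((fun _ ↦ c) + h)) atTop (𝓝 c) := by
  simpa [symMean_const] using Tendsto.const_add c hh

lemma le_lowerDensity_of_forall_add_le {D : Set ℤ} {h : ℤ → ℝ} {c : ℝ} (hh : h ∈ meanZero)
    (hD : ∀ v, c + h v ≤ D.indicator 1 v) : c ≤ lowerDensity D := by
  have bounded (n : ℕ) : symMean n (D.indicator 1) ≤ 1 :=
    (symMean_mono n (Set.indicator_le_self' fun _ _ ↦ zero_le_one)).trans_eq (symMean_const n 1)
  have tendsto_c := tendsto_symMean_const_add hh c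
  rw [lowerDensity_eq_liminf_symMean, ← tendsto_c.liminf_eq]
  exact liminf_le_liminf (Eventually.of_forall fun n ↦ symMean_mono n hD)
    tendsto_c.isBoundedUnder_ge (isBoundedUnder_of ⟨1, bounded⟩).isCoboundedUnder_ge

lemma lowerDensity_eq_of_forall_eq_add {D : Set ℤ} {h : ℤ → ℝ} {c : ℝ} (hh : h ∈ meanZero)
    (hD : ∀ v, D.indicator 1 v = c + h v) : lowerDensity D = c := by
  rw [lowerDensity_eq_liminf_symMean, funext hD]
  exact (tendsto_symMean_const_add hh c).liminf_eq

lemma sum_Icc_neg_fwdDiff_one (f : ℤ → ℝ) (n : ℕ) :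
    ∑ v ∈ Finset.Icc (-n : ℤ) n, Δ_[1] f v = f (n + 1) - f (-n) := by
  induction n with
  | zero => simp [fwdDiff]
  | succ n ih =>
    have Icc_succ : Finset.Icc (-(n + 1 : ℕ) : ℤ) (n + 1 : ℕ) =
        insert (-(n + 1) : ℤ) (insert (n + 1 : ℤ) (Finset.Icc (-n : ℤ) n)) := by
      ext v
      simp only [Finset.mem_Icc, Finset.mem_insert]
      lia
    rw [Icc_succ, Finset.sum_insert (by simp only [Finset.mem_insert, Finset.mem_Icc]; lia),
      Finset.sum_insert (by simp), ih]
    simp [fwdDiff]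

lemma fwdDiff_one_mem_meanZero {f : ℤ → ℝ} {C : ℝ} (hf : ∀ v, |f v| ≤ C) :
    Δ_[1] f ∈ meanZero := by
  have tendsto_zero : Tendsto (fun n : ℕ ↦ 2 * C / (2 * n + 1)) atTop (𝓝 0) :=
    (tendsto_atTop_add_const_right _ _
      (tendsto_natCast_atTop_atTop.const_mul_atTop two_pos)).const_div_atTop _
  refine squeeze_zero_norm (fun n ↦ ?_) tendsto_zero
  rw [symMean_apply, sum_Icc_neg_fwdDiff_one, norm_div, Real.norm_eq_abs,
    Real.norm_of_nonneg (by positivity)]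
  gcongr
  linarith [abs_sub (f (n + 1)) (f (-n)), hf (n + 1), hf (-n)]

lemma fwdDiff_mem_meanZero {f : ℤ → ℝ} {C : ℝ} (hf : ∀ v, |f v| ≤ C) (c : ℤ) :
    Δ_[c] f ∈ meanZero := by
  have succ_sub_mem (c : ℤ) : Δ_[c + 1] f - Δ_[c] f ∈ meanZero := by
    convert fwdDiff_one_mem_meanZero (f := fun v ↦ f (v + c)) (fun v ↦ hf _) using 1
    ext v
    simp [fwdDiff, add_right_comm, add_assoc]
  induction c using Int.induction_on with
  | zero =>
    have fwdDiff_zero : Δ_[(0 : ℤ)] f = 0 := by ext; simp [fwdDiff]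
    simp [fwdDiff_zero]
  | succ c ih => simpa using add_mem (succ_sub_mem c) ih
  | pred c ih => simpa using sub_mem ih (succ_sub_mem (-c - 1))

lemma fwdDiff_indicator_mem_meanZero (A : Set ℤ) (c : ℤ) :
    Δ_[c] (A.indicator (1 : ℤ → ℝ)) ∈ meanZero :=
  fwdDiff_mem_meanZero (C := 1) (fun v ↦ by by_cases hv : v ∈ A <;> simp [hv]) c

lemma exists_meanZero_inv_card_le_indicator_add {A : Set ℤ} {T : Finset ℤ}
    (hT : ∀ v, ∃ t ∈ T, v + t ∈ A) :
    ∃ h ∈ meanZero, ∀ v, (T.card : ℝ)⁻¹ ≤ A.indicator 1 v + h v := by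
  set a : ℤ → ℝ := A.indicator 1
  have one_le_sum (v : ℤ) : 1 ≤ ∑ t ∈ T, a (v + t) := by
    obtain ⟨t, ht, hvt⟩ := hT v
    calc 1 = a (v + t) := by simp [a, hvt]
      _ ≤ ∑ t ∈ T, a (v + t) := Finset.single_le_sum (f := fun t ↦ a (v + t))
        (fun _ _ ↦ Set.indicator_nonneg (fun _ _ ↦ zero_le_one) _) ht
  have card_ne_zero : (T.card : ℝ) ≠ 0 := by
    obtain ⟨t, ht, -⟩ := hT 0
    exact_mod_cast Finset.card_ne_zero_of_mem ht
  refine ⟨(T.card : ℝ)⁻¹ • ∑ t ∈ T, Δ_[t] a,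
    meanZero.smul_mem _ (sum_mem fun t _ ↦ fwdDiff_indicator_mem_meanZero A t), fun v ↦ ?_⟩
  calc (T.card : ℝ)⁻¹ ≤ (T.card : ℝ)⁻¹ * ∑ t ∈ T, a (v + t) :=
        le_mul_of_one_le_right (by positivity) (one_le_sum v)
    _ = a v + ((T.card : ℝ)⁻¹ • ∑ t ∈ T, Δ_[t] a) v := by simp [fwdDiff, mul_sub, card_ne_zero]

lemma lowerDensity_zmod_preimage {N : ℕ} [NeZero N] (P : Finset (ZMod N)) :
    lowerDensity {x : ℤ | (x : ZMod N) ∈ P} = P.card / N := by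
  classical
  set D := {x : ℤ | (x : ZMod N) ∈ P} with D_def
  have period_sum (v : ℤ) : ∑ y : ZMod N, D.indicator (1 : ℤ → ℝ) (v + y.val) = P.card := by
    calc ∑ y : ZMod N, D.indicator (1 : ℤ → ℝ) (v + y.val)
        = ∑ y : ZMod N, if (v : ZMod N) + y ∈ P then 1 else 0 := by
          simp [D_def, Set.indicator_apply]
      _ = ∑ y : ZMod N, if y ∈ P then 1 else 0 :=
          Equiv.sum_comp (Equiv.addLeft (v : ZMod N)) fun y ↦ if y ∈ P then (1 : ℝ) else 0
      _ = P.card := by simp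
  have hN : (N : ℝ) ≠ 0 := NeZero.ne _
  refine lowerDensity_eq_of_forall_eq_add
    (h := -(N : ℝ)⁻¹ • ∑ y : ZMod N, Δ_[(y.val : ℤ)] (D.indicator 1))
    (meanZero.smul_mem _ (sum_mem fun y _ ↦ fwdDiff_indicator_mem_meanZero D _)) fun v ↦ ?_
  simp only [Pi.smul_apply, Finset.sum_apply, fwdDiff, Finset.sum_sub_distrib, period_sum,
    Finset.sum_const, Finset.card_univ, ZMod.card, nsmul_eq_mul, smul_eq_mul]
  field_simp
  ring

lemma isDominating_pair_iff {s : ℤ} {D : Set ℤ} :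
    IsDominating {1, s} D ↔ ∀ v, v ∈ D ∨ v - 1 ∈ D ∨ v - s ∈ D := by
  simp [IsDominating, ← sub_eq_iff_eq_add, and_or_left, exists_or]

lemma IsDominating.neg {s : ℤ} {D : Set ℤ} (hD : IsDominating {1, s} D) :
    IsDominating {1, 1 - s} (-D) := by
  rw [isDominating_pair_iff] at hD ⊢
  intro v
  have reflected := hD (1 - v)
  simp only [Set.mem_neg]
  grind

lemma domRatio_one_sub (s : ℤ) : domRatio {1, 1 - s} = domRatio {1, s} := by
  unfold domRatio
  congr 1
  ext x
  constructor
  · rintro ⟨D, hD, rfl⟩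
    exact ⟨-D, by simpa using hD.neg, (lowerDensity_neg D).symm⟩
  · rintro ⟨D, hD, rfl⟩
    exact ⟨-D, hD.neg, (lowerDensity_neg D).symm⟩

/-- The elements `x` of `D` such that `x + 1` also lies in `D`; they pay for the triples of
consecutive integers that miss `D`. -/
def adjacentStarts (D : Set ℤ) : Set ℤ := {x ∈ D | x + 1 ∈ D}

/-- The elements of `D` at distance at most `2` from the next element of `D`. Their density measures
by how much `D` must exceed density `1 / 3`. -/
def shortGapStarts (D : Set ℤ) : Set ℤ := {x ∈ D | x + 1 ∈ D ∨ x + 2 ∈ D}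

lemma adjacentStarts_subset_shortGapStarts (D : Set ℤ) : adjacentStarts D ⊆ shortGapStarts D :=
  fun _ hx ↦ ⟨hx.1, Or.inl hx.2⟩

section LowerBound

variable {s : ℤ} {D : Set ℤ}

lemma IsDominating.sub_mem_adjacentStarts (hD : IsDominating {1, s} D) {v : ℤ} (h₀ : v ∉ D)
    (h₁ : v + 1 ∉ D) (h₂ : v + 2 ∉ D) : v + 1 - s ∈ adjacentStarts D := by
  rw [isDominating_pair_iff] at hD
  have dominated₁ := hD (v + 1)
  have dominated₂ := hD (v + 2)
  unfold adjacentStarts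
  grind

lemma IsDominating.one_add_indicator_le (hD : IsDominating {1, s} D) (v : ℤ) :
    1 + (shortGapStarts D).indicator (1 : ℤ → ℝ) v + (adjacentStarts D).indicator 1 (v + 1) ≤
      D.indicator 1 v + D.indicator 1 (v + 1) + D.indicator 1 (v + 2) +
        (adjacentStarts D).indicator 1 (v + 1 - s) := by
  classical
  have mem_shortGap : v ∈ shortGapStarts D ↔ v ∈ D ∧ (v + 1 ∈ D ∨ v + 2 ∈ D) := Iff.rfl
  have mem_adjacent : v + 1 ∈ adjacentStarts D ↔ v + 1 ∈ D ∧ v + 2 ∈ D := by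
    simp [adjacentStarts, add_assoc]
  have sub_mem_of_empty := hD.sub_mem_adjacentStarts (v := v)
  simp only [Set.indicator_apply, mem_shortGap, mem_adjacent, Pi.one_apply]
  by_cases h₀ : v ∈ D <;> by_cases h₁ : v + 1 ∈ D <;> by_cases h₂ : v + 2 ∈ D <;>
    grind

lemma IsDominating.le_lowerDensity_of_shortGapStarts (hD : IsDominating {1, s} D) {T : Finset ℤ}
    (hT : ∀ v, ∃ t ∈ T, v + t ∈ shortGapStarts D) :
    (1 + (T.card : ℝ)⁻¹) / 3 ≤ lowerDensity D := by
  obtain ⟨h, hh, inv_card_le⟩ := exists_meanZero_inv_card_le_indicator_add hT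
  set d : ℤ → ℝ := D.indicator 1
  set a : ℤ → ℝ := (adjacentStarts D).indicator 1
  have diff_mem := fwdDiff_indicator_mem_meanZero
  have error_mem : Δ_[1] d + Δ_[2] d + Δ_[1 - s] a - Δ_[1] a + h ∈ meanZero :=
    add_mem (sub_mem (add_mem (add_mem (diff_mem D 1) (diff_mem D 2)) (diff_mem _ (1 - s)))
      (diff_mem _ 1)) hh
  refine le_lowerDensity_of_forall_add_le (meanZero.smul_mem (-1 / 3) error_mem) fun v ↦ ?_
  have triple_le := hD.one_add_indicator_le v
  simp only [Pi.smul_apply, Pi.add_apply, Pi.sub_apply, fwdDiff, smul_eq_mul, ← add_sub_assoc]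
  linarith [inv_card_le v]

lemma IsDominating.add_three_mem (hD : IsDominating {1, s} D) {x : ℤ} (hx : x ∈ D)
    (hxG : x ∉ shortGapStarts D) (hxsG : x + 2 - s ∉ shortGapStarts D) :
    x + 2 - s ∈ D ∧ x + 3 ∈ D := by
  rw [isDominating_pair_iff] at hD
  have dominated₂ := hD (x + 2)
  have dominated₃ := hD (x + 3)
  simp only [shortGapStarts, Set.mem_ofPred_eq] at hxG hxsG
  grind

lemma IsDominating.add_three_mul_mem (hD : IsDominating {1, s} D) {x : ℤ} (hx : x ∈ D) (m : ℕ)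
    (hxG : ∀ j < m, x + 3 * j ∉ shortGapStarts D ∧ x + 3 * j + 2 - s ∉ shortGapStarts D) :
    x + 3 * m ∈ D := by
  induction m with
  | zero => simpa using hx
  | succ m ih =>
    obtain ⟨hG, hsG⟩ := hxG m m.lt_succ_self
    have next_mem := (hD.add_three_mem (ih fun j hj ↦ hxG j (by lia)) hG hsG).2
    convert next_mem using 1
    push_cast
    ring

end LowerBound

section MultipleOfThree

variable {k : ℕ} {D : Set ℤ}

lemma IsDominating.exists_shortGapStarts_of_mem (hk : 1 ≤ k) (hD : IsDominating {1, 3 * (k : ℤ)} D)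
    {x : ℤ} (hx : x ∈ D) :
    ∃ y ∈ Set.Icc (x + 2 - 3 * k) (x + 3 * k - 3), y ∈ shortGapStarts D := by
  by_contra! no_gap
  have last_mem : x + 3 * (k - 1 : ℕ) ∈ D := hD.add_three_mul_mem hx (k - 1) fun j hj ↦
    ⟨no_gap _ ⟨by lia, by lia⟩, no_gap _ ⟨by lia, by lia⟩⟩
  have pred_mem : x - 1 ∈ D := by
    convert (hD.add_three_mem last_mem (no_gap _ ⟨by lia, by lia⟩)
      (no_gap _ ⟨by lia, by lia⟩)).1 using 1
    lia
  exact no_gap (x - 1) ⟨by lia, by lia⟩ ⟨pred_mem, Or.inl (by simpa using hx)⟩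

lemma IsDominating.exists_shortGapStarts (hk : 1 ≤ k) (hD : IsDominating {1, 3 * (k : ℤ)} D)
    (w : ℤ) : ∃ t ∈ Finset.Icc (1 : ℤ) (6 * k - 1), w + t ∈ shortGapStarts D := by
  suffices ∃ y ∈ Set.Icc (w + 1) (w + (6 * k - 1)), y ∈ shortGapStarts D by
    obtain ⟨y, ⟨_, _⟩, hy⟩ := this
    exact ⟨y - w, Finset.mem_Icc.2 ⟨by lia, by lia⟩, by simpa using hy⟩
  by_cases empty : w + 3 * k ∉ D ∧ w + 3 * k + 1 ∉ D ∧ w + 3 * k + 2 ∉ D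
  · obtain ⟨h₀, h₁, h₂⟩ := empty
    have adjacent := hD.sub_mem_adjacentStarts h₀ h₁ h₂
    exact ⟨_, ⟨by lia, by lia⟩, adjacentStarts_subset_shortGapStarts D adjacent⟩
  · obtain ⟨x, hx, _, _⟩ : ∃ x ∈ D, w + 3 * k ≤ x ∧ x ≤ w + 3 * k + 2 := by grind
    obtain ⟨y, ⟨_, _⟩, hy⟩ := hD.exists_shortGapStarts_of_mem hk hx
    exact ⟨y, ⟨by lia, by lia⟩, hy⟩

lemma IsDominating.le_lowerDensity (hk : 1 ≤ k) (hD : IsDominating {1, 3 * (k : ℤ)} D) :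
    2 * (k : ℝ) / (6 * k - 1) ≤ lowerDensity D := by
  have bound := hD.le_lowerDensity_of_shortGapStarts (hD.exists_shortGapStarts hk)
  have card_eq : ((Finset.Icc (1 : ℤ) (6 * k - 1)).card : ℝ) = 6 * k - 1 := by
    have int_card_eq : ((Finset.Icc (1 : ℤ) (6 * k - 1)).card : ℤ) = 6 * k - 1 := by
      rw [Int.card_Icc]
      lia
    exact_mod_cast int_card_eq
  have hk' : (1 : ℝ) ≤ k := by exact_mod_cast hk
  have denom_ne_zero : 6 * (k : ℝ) - 1 ≠ 0 := by linarith
  calc 2 * (k : ℝ) / (6 * k - 1) = (1 + (6 * k - 1 : ℝ)⁻¹) / 3 := by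
        rw [inv_eq_one_div, one_add_div denom_ne_zero]
        ring
    _ ≤ lowerDensity D := by rwa [card_eq] at bound

end MultipleOfThree

/-- The residues whose double is represented in `{0, …, N - 1}` by a multiple of `3`: the extremal
dominating set, for `N = 6k - 1`. -/
def doubleMultThree (N : ℕ) [NeZero N] : Finset (ZMod N) := {x | 3 ∣ (2 * x).val}

section Extremal

variable {N : ℕ} [NeZero N]

lemma card_filter_three_dvd_val : ({y : ZMod N | 3 ∣ y.val} : Finset _).card = (N + 2) / 3 := by
  have card_eq_count : ({y : ZMod N | 3 ∣ y.val} : Finset _).card = N.count (· ≡ 0 [MOD 3]) := by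
    rw [Nat.count_eq_card_filter_range]
    refine Finset.card_nbij' ZMod.val Nat.cast ?_ ?_ ?_ ?_
    · intro y hy
      simp_all [Nat.modEq_zero_iff_dvd, ZMod.val_lt]
    · intro r hr
      simp_all [Nat.modEq_zero_iff_dvd, Nat.mod_eq_of_lt]
    · exact fun y _ ↦ ZMod.natCast_zmod_val y
    · exact fun r hr ↦ ZMod.val_cast_of_lt (by simp_all)
  rw [card_eq_count, Nat.count_modEq_card _ three_pos]
  split_ifs <;> lia

lemma card_doubleMultThree (h : IsUnit (2 : ZMod N)) :
    (doubleMultThree N).card = (N + 2) / 3 := by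
  rw [← card_filter_three_dvd_val]
  exact Finset.card_bijective (2 * ·) (IsUnit.isUnit_iff_mulLeft_bijective.1 h)
    (by simp [doubleMultThree])

lemma zmod_val_sub_natCast {y : ZMod N} {j : ℕ} (hj : j ≤ y.val) : (y - j).val = y.val - j := by
  rw [← ZMod.val_cast_of_lt ((Nat.sub_le _ j).trans_lt y.val_lt), Nat.cast_sub hj,
    ZMod.natCast_zmod_val]

lemma isDominating_doubleMultThree {s : ℤ} (hs : 2 * (s : ZMod N) = 1) :
    IsDominating {1, s} {x : ℤ | (x : ZMod N) ∈ doubleMultThree N} := by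
  rw [isDominating_pair_iff]
  intro v
  set y : ZMod N := 2 * v
  have double_sub_one : 2 * ((v - 1 : ℤ) : ZMod N) = y - (2 : ℕ) := by push_cast; ring
  have double_sub_s : 2 * ((v - s : ℤ) : ZMod N) = y - (1 : ℕ) := by
    push_cast
    rw [mul_sub, hs]
  simp only [doubleMultThree, Finset.mem_filter_univ, Set.mem_ofPred_eq, double_sub_one,
    double_sub_s]
  obtain h | h | h : y.val % 3 = 0 ∨ y.val % 3 = 1 ∨ y.val % 3 = 2 := by lia
  · exact Or.inl (Nat.dvd_of_mod_eq_zero h)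
  · exact Or.inr (Or.inr (by rw [zmod_val_sub_natCast (by lia)]; lia))
  · exact Or.inr (Or.inl (by rw [zmod_val_sub_natCast (by lia)]; lia))

end Extremal

lemma exists_isDominating_lowerDensity_eq {k : ℕ} (hk : 1 ≤ k) :
    ∃ D, IsDominating {1, 3 * (k : ℤ)} D ∧ 2 * (k : ℝ) / (6 * k - 1) = lowerDensity D := by
  have : NeZero (6 * k - 1) := ⟨by lia⟩
  have two_mul_three_mul : 2 * ((3 * k : ℤ) : ZMod (6 * k - 1)) = 1 := by
    have modulus_eq_zero := ZMod.natCast_self (6 * k - 1)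
    rw [Nat.cast_sub (by lia)] at modulus_eq_zero
    push_cast at modulus_eq_zero ⊢
    linear_combination modulus_eq_zero
  have card_eq : (doubleMultThree (6 * k - 1)).card = 2 * k := by
    rw [card_doubleMultThree (.of_mul_eq_one _ two_mul_three_mul)]
    lia
  refine ⟨_, isDominating_doubleMultThree two_mul_three_mul, ?_⟩
  rw [lowerDensity_zmod_preimage, card_eq, Nat.cast_sub (by lia)]
  push_cast
  rfl

lemma domRatio_one_three_mul {k : ℕ} (hk : 1 ≤ k) :
    domRatio {1, 3 * (k : ℤ)} = 2 * (k : ℝ) / (6 * k - 1) := by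
  refine IsLeast.csInf_eq ⟨exists_isDominating_lowerDensity_eq hk, ?_⟩
  rintro _ ⟨D, hD, rfl⟩
  exact hD.le_lowerDensity hk

theorem stmt_18 (k : ℤ) (hk : 1 ≤ k) :
    domRatio {1, 3*k} = 2*(k:ℝ) / (6*(k:ℝ) - 1) ∧
    domRatio {1, -(3*k) + 1} = 2*(k:ℝ) / (6*(k:ℝ) - 1) := by
  lift k to ℕ using by lia
  have ratio : domRatio {1, 3 * (k : ℤ)} = 2 * (k : ℝ) / (6 * k - 1) :=
    domRatio_one_three_mul (by lia)
  refine ⟨ratio, ?_⟩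
  rw [neg_add_eq_sub, domRatio_one_sub]
  exact ratio
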